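/- arXiv:1906.06753 — 4 statements merged into one kernel-verified Lean document; each statement's English description precedes it below -/
import Mathlib

section
/- Let λ > 0 with λ ≠ 1 and let g : ℝ → ℝ be a C^∞ function satisfying g(λ·x) = λ·g(x) for every x ∈ ℝ. Then there exists κ ∈ ℝ such that g(x) = κ·x for all x ∈ ℝ. -/
/-!
Only differentiability at `0` matters. Replacing `lam` by its inverse if necessary, `g` is
equivariant under a contraction `x ↦ μ * x` with `0 < μ < 1`, and `g 0 = 0`. For `x ≠ 0` the
difference quotient of `g` at `0` takes the constant value `g x / x` along the sequence `μ ^ n * x`,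
which tends to `0`; hence `g x / x = g'(0)`, so `κ = g'(0)` works.
-/

/-- The contracting case, in which the orbit of every point under the homothety tends to `0`. -/
theorem eq_deriv_zero_mul_of_contraction {μ : ℝ} (hμ : 0 < μ) (hμ1 : μ < 1) {g : ℝ → ℝ}
    (hg : DifferentiableAt ℝ g 0) (hinv : ∀ x : ℝ, g (μ * x) = μ * g x) (x : ℝ) :
    g x = deriv g 0 * x := by
  have h0 : g 0 = 0 := by
    have h := hinv 0
    rw [mul_zero] at h
    have h' : (1 - μ) * g 0 = 0 := by linarith
    exact (mul_eq_zero.mp h').resolve_left (by linarith)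
  rcases eq_or_ne x 0 with rfl | hx
  · simp [h0]
  have hpow : ∀ n : ℕ, g (μ ^ n * x) = μ ^ n * g x := by
    intro n
    induction n with
    | zero => simp
    | succ k ih => rw [pow_succ', mul_assoc, hinv, ih, mul_assoc]
  have hseq : Filter.Tendsto (fun n : ℕ => μ ^ n * x) Filter.atTop (nhdsWithin 0 {0}ᶜ) := by
    refine tendsto_nhdsWithin_iff.mpr ⟨?_, Filter.Eventually.of_forall fun n => ?_⟩
    · simpa using (tendsto_pow_atTop_nhds_zero_of_lt_one hμ.le hμ1).mul_const x
    · exact mul_ne_zero (pow_ne_zero n hμ.ne') hx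
  have hslope := (hasDerivAt_iff_tendsto_slope.mp hg.hasDerivAt).comp hseq
  have hconst : slope g 0 ∘ (fun n : ℕ => μ ^ n * x) = fun _ => g x / x := by
    funext n
    have hn : μ ^ n ≠ 0 := pow_ne_zero n hμ.ne'
    simp only [Function.comp_apply, slope_def_field, h0, sub_zero, hpow]
    exact mul_div_mul_left _ _ hn
  rw [hconst] at hslope
  exact (div_eq_iff hx).mp (tendsto_nhds_unique tendsto_const_nhds hslope)

/-- Lemma 3.2(i): a smooth vector field `g(x)∂ₓ` on ℝ invariant under a homothety
`x ↦ λx` (`λ > 0`, `λ ≠ 1`) equals `κ·x∂ₓ` for some `κ ∈ ℝ`. -/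
theorem smooth_homothety_invariant_vector_field
    (lam : ℝ) (hlam : 0 < lam) (hne : lam ≠ 1)
    (g : ℝ → ℝ) (hg : ContDiff ℝ (⊤ : ℕ∞) g)
    (hinv : ∀ x : ℝ, g (lam * x) = lam * g x) :
    ∃ κ : ℝ, ∀ x : ℝ, g x = κ * x := by
  have hd : DifferentiableAt ℝ g 0 := hg.contDiffAt.differentiableAt (by simp)
  refine ⟨deriv g 0, ?_⟩
  rcases lt_or_gt_of_ne hne with h | h
  · exact eq_deriv_zero_mul_of_contraction hlam h hd hinv
  · refine eq_deriv_zero_mul_of_contraction (inv_pos.mpr hlam) (inv_lt_one_of_one_lt₀ h) hd ?_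
    intro x
    have hx := hinv (lam⁻¹ * x)
    rw [mul_inv_cancel_left₀ hlam.ne'] at hx
    rw [hx, inv_mul_cancel_left₀ hlam.ne']
end

section
/- Let h : ℝ → ℝ be differentiable at 0 and satisfy h(e^t·x) = e^t·h(x) for all t, x ∈ ℝ. Then h(x) = h'(0)·x for all x ∈ ℝ. -/
/-- Key step of Lemma 3.2(ii): a map commuting with the flow `ψᵗ(x) = eᵗ·x`
of `x∂ₓ` that is differentiable at `0` is a homothety `h(x) = h'(0)·x`. -/
theorem map_commuting_with_euler_flow_is_homothety
    (h : ℝ → ℝ) (hdiff : DifferentiableAt ℝ h 0)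
    (hcomm : ∀ t x : ℝ, h (Real.exp t * x) = Real.exp t * h x) :
    ∀ x : ℝ, h x = deriv h 0 * x := by
  intro x
  have h_zero : h 0 = 0 := by
    have h2 := hcomm (Real.log 2) 0
    rw [Real.exp_log (by norm_num), mul_zero] at h2
    linarith
  -- The right derivative at `0` of `s ↦ h (s * x)` is computed in two ways: by the chain rule,
  -- and from `h (s * x) = s * h x` for `s > 0`.
  have h_chain : HasDerivAt (fun s : ℝ => h (s * x)) (deriv h 0 * x) 0 := by
    have hd : HasDerivAt h (deriv h 0) (0 * x) := by
      simpa using hdiff.hasDerivAt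
    exact hd.comp 0 (hasDerivAt_mul_const x)
  have h_homog : HasDerivWithinAt (fun s : ℝ => h (s * x)) (h x) (Set.Ioi 0) 0 := by
    refine (hasDerivAt_mul_const (h x)).hasDerivWithinAt.congr (fun s hs => ?_) (by simp [h_zero])
    have hs' := hcomm (Real.log s) x
    rwa [Real.exp_log hs] at hs'
  exact (uniqueDiffWithinAt_Ioi (0 : ℝ)).eq_deriv _ h_homog h_chain.hasDerivWithinAt
end

section
/- Let κ ∈ ℝ with κ ≠ 0, and let f : ℝ → ℝ be a C^∞ function with f(0) = 0 and f'(0) = κ. Then there exist ε > 0 and a function x : ℝ → ℝ which is C^∞ on (−ε, ε), with x(0) = 0 and x'(0) ≠ 0, such that f(u)·x'(u) = κ·x(u) for every u ∈ (−ε, ε). -/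
/-!
Since `f 0 = 0` and `f' 0 = κ`, Hadamard's lemma (`exists_smooth_quotient`), applied twice, gives
`f u = u * g u` and `g u = κ + u * k u` with `g`, `k` smooth. Near `0` the function `g` does not
vanish, so `κ / f u = 1 / u + h u` with `h = -k / g` smooth. Integrating `x' / x = κ / f` suggests
the coordinate `x u = u * exp (∫ s in 0..u, h s)`, and this satisfies the equation also at `u = 0`.

Hadamard's lemma itself comes from the formula `g u = ∫ t in 0..1, f' (t * u)`. Its smoothness
follows by repeated differentiation under the integral sign, each derivative contributing a factor
`t`; this is why the induction runs over the integrals `∫ t in 0..1, t ^ n * h (t * u)`.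
-/

open Set Filter Topology

/-- Differentiation under the integral sign for the moments of `t ↦ h (t * u)`. -/
lemma hasDerivAt_moment {h : ℝ → ℝ} (hh : ContDiff ℝ 1 h) (n : ℕ) (u₀ : ℝ) :
    HasDerivAt (fun u : ℝ => ∫ t in (0 : ℝ)..1, t ^ n * h (t * u))
      (∫ t in (0 : ℝ)..1, t ^ (n + 1) * deriv h (t * u₀)) u₀ := by
  have hc : Continuous h := hh.continuous
  have hd : Continuous (deriv h) := hh.continuous_deriv le_rfl
  obtain ⟨C, hC⟩ := (isCompact_Icc (a := -(|u₀| + 1)) (b := |u₀| + 1)).exists_bound_of_continuousOn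
    hd.continuousOn
  refine (intervalIntegral.hasDerivAt_integral_of_dominated_loc_of_deriv_le
    (F := fun u t => t ^ n * h (t * u)) (F' := fun u t => t ^ (n + 1) * deriv h (t * u))
    (bound := fun _ => C) (s := Metric.ball u₀ 1) (Metric.ball_mem_nhds u₀ one_pos)
    ?_ ?_ ?_ ?_ ?_ ?_).2
  · exact Eventually.of_forall fun u =>
      (by fun_prop : Continuous fun t : ℝ => t ^ n * h (t * u)).aestronglyMeasurable
  · exact (by fun_prop : Continuous fun t : ℝ => t ^ n * h (t * u₀)).intervalIntegrable _ _
  · exact (by fun_prop :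
      Continuous fun t : ℝ => t ^ (n + 1) * deriv h (t * u₀)).aestronglyMeasurable
  · refine Eventually.of_forall fun t ht u hu => ?_
    rw [uIoc_of_le zero_le_one] at ht
    have hu' : |u| ≤ |u₀| + 1 := by
      have h1 : |u - u₀| < 1 := by simpa [Real.dist_eq] using hu
      have h2 := abs_sub_abs_le_abs_sub u u₀
      linarith
    have htu : |t * u| ≤ |u₀| + 1 := by
      rw [abs_mul, abs_of_pos ht.1]
      exact (mul_le_of_le_one_left (abs_nonneg u) ht.2).trans hu'
    have hb := hC (t * u) (abs_le.mp htu)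
    rw [norm_mul, norm_pow, Real.norm_of_nonneg ht.1.le]
    exact (mul_le_of_le_one_left (norm_nonneg _) (pow_le_one₀ ht.1.le ht.2)).trans hb
  · exact intervalIntegrable_const
  · refine Eventually.of_forall fun t _ u _ => ?_
    have h1 : HasDerivAt h (deriv h (t * u)) (t * u) :=
      (hh.differentiable one_ne_zero _).hasDerivAt
    have h2 : HasDerivAt (fun u : ℝ => t * u) t u := by
      simpa using (hasDerivAt_id u).const_mul t
    exact ((h1.comp u h2).const_mul (t ^ n)).congr_deriv (by ring)

lemma contDiff_moment_nat (m : ℕ) : ∀ (n : ℕ) {h : ℝ → ℝ}, ContDiff ℝ (⊤ : ℕ∞) h →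
    ContDiff ℝ m (fun u : ℝ => ∫ t in (0 : ℝ)..1, t ^ n * h (t * u)) := by
  induction m with
  | zero =>
    intro n h hh
    have hd := fun u => hasDerivAt_moment (hh.of_le (by exact_mod_cast le_top)) n u
    exact contDiff_zero.2 (continuous_iff_continuousAt.2 fun u => (hd u).continuousAt)
  | succ m ih =>
    intro n h hh
    have hd := fun u => hasDerivAt_moment (hh.of_le (by exact_mod_cast le_top)) n u
    push_cast
    refine contDiff_succ_iff_deriv.2 ⟨fun u => (hd u).differentiableAt, by simp, ?_⟩
    rw [funext fun u => (hd u).deriv]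
    exact ih (n + 1) (contDiff_infty_iff_deriv.1 hh).2

/-- Hadamard's lemma in one variable. -/
lemma exists_smooth_quotient {f : ℝ → ℝ} (hf : ContDiff ℝ (⊤ : ℕ∞) f) :
    ∃ g : ℝ → ℝ, ContDiff ℝ (⊤ : ℕ∞) g ∧ g 0 = deriv f 0 ∧ ∀ u, f u = f 0 + u * g u := by
  have hf' := (contDiff_infty_iff_deriv.1 hf).2
  refine ⟨fun u => ∫ t in (0 : ℝ)..1, deriv f (t * u), ?_, by simp, fun u => ?_⟩
  · refine contDiff_infty.2 fun m => ?_
    simpa using contDiff_moment_nat m 0 hf'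
  · have hd := (contDiff_infty_iff_deriv.1 hf).1
    have hc : Continuous (deriv f) := hf'.continuous
    have h1 : ∫ t in (0 : ℝ)..1, u * deriv f (t * u) = f (1 * u) - f (0 * u) := by
      refine intervalIntegral.integral_eq_sub_of_hasDerivAt (f := fun t => f (t * u))
        (fun t _ => ?_) ((by fun_prop : Continuous _).intervalIntegrable _ _)
      have h2 : HasDerivAt (fun t : ℝ => t * u) u t := by
        simpa using (hasDerivAt_id t).mul_const u
      exact ((hd (t * u)).hasDerivAt.comp t h2).congr_deriv (mul_comm _ _)
    rw [intervalIntegral.integral_const_mul] at h1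
    simp only [one_mul, zero_mul] at h1
    linarith

/-- A smooth function on an open interval around `0` has a smooth primitive, written as an
integral from `0`. -/
lemma primitive_smooth {h : ℝ → ℝ} {ε : ℝ} (hε : 0 < ε)
    (hh : ContDiffOn ℝ (⊤ : ℕ∞) h (Ioo (-ε) ε)) :
    ContDiffOn ℝ (⊤ : ℕ∞) (fun u => ∫ s in (0 : ℝ)..u, h s) (Ioo (-ε) ε) ∧
      ∀ u ∈ Ioo (-ε) ε, HasDerivAt (fun u => ∫ s in (0 : ℝ)..u, h s) (h u) u := by
  have hd : ∀ u ∈ Ioo (-ε) ε, HasDerivAt (fun u => ∫ s in (0 : ℝ)..u, h s) (h u) u := by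
    intro u hu
    have hsub : uIcc 0 u ⊆ Ioo (-ε) ε :=
      ordConnected_Ioo.uIcc_subset ⟨by linarith, hε⟩ hu
    exact intervalIntegral.integral_hasDerivAt_right
      (hh.continuousOn.mono hsub).intervalIntegrable
      (hh.continuousOn.stronglyMeasurableAtFilter isOpen_Ioo u hu)
      (hh.continuousOn.continuousAt (isOpen_Ioo.mem_nhds hu))
  refine ⟨(contDiffOn_infty_iff_deriv_of_isOpen isOpen_Ioo).2
    ⟨fun u hu => (hd u hu).differentiableAt.differentiableWithinAt, ?_⟩, hd⟩
  exact hh.congr fun u hu => (hd u hu).deriv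

/-- Lemma 4.1: for a smooth vector field `f(u)∂ᵤ` with a simple fixed point at
`0` of exponent `κ ≠ 0` (`f(0) = 0`, `f'(0) = κ`), there is a local coordinate
`x` around `0` with `x(0) = 0`, `x'(0) ≠ 0`, transforming the vector field into
`κ·x∂ₓ`, i.e. `f(u)·x'(u) = κ·x(u)` near `0`. -/
theorem exists_linearizing_coordinate_simple_fixed_point
    (κ : ℝ) (hκ : κ ≠ 0) (f : ℝ → ℝ) (hf : ContDiff ℝ (⊤ : ℕ∞) f)
    (hf0 : f 0 = 0) (hf1 : deriv f 0 = κ) :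
    ∃ ε > (0 : ℝ), ∃ X : ℝ → ℝ,
      ContDiffOn ℝ (⊤ : ℕ∞) X (Set.Ioo (-ε) ε) ∧ X 0 = 0 ∧ deriv X 0 ≠ 0 ∧
      ∀ u ∈ Set.Ioo (-ε) ε, f u * deriv X u = κ * X u := by
  obtain ⟨g, hg, hg0, hfg⟩ := exists_smooth_quotient hf
  obtain ⟨k, hk, -, hgk⟩ := exists_smooth_quotient hg
  rw [hf1] at hg0
  simp only [hf0, zero_add] at hfg
  rw [hg0] at hgk
  have hne : ∀ᶠ u in 𝓝 (0 : ℝ), g u ≠ 0 :=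
    hg.continuous.continuousAt.eventually_ne (by rwa [hg0])
  obtain ⟨ε, hε, hball⟩ := Metric.eventually_nhds_iff.1 hne
  have hgne : ∀ u ∈ Ioo (-ε) ε, g u ≠ 0 := fun u hu =>
    hball (by simpa [Real.dist_eq] using abs_lt.2 hu)
  have hh : ContDiffOn ℝ (⊤ : ℕ∞) (fun u => -k u / g u) (Ioo (-ε) ε) :=
    hk.neg.contDiffOn.div hg.contDiffOn hgne
  obtain ⟨hH, hHd⟩ := primitive_smooth hε hh
  set H : ℝ → ℝ := fun u => ∫ s in (0 : ℝ)..u, -k s / g s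
  have hXd : ∀ u ∈ Ioo (-ε) ε, HasDerivAt (fun u => u * Real.exp (H u))
      (1 * Real.exp (H u) + u * (Real.exp (H u) * (-k u / g u))) u := fun u hu =>
    (hasDerivAt_id u).mul (hHd u hu).exp
  refine ⟨ε, hε, fun u => u * Real.exp (H u), contDiffOn_id.mul hH.exp, by simp, ?_, ?_⟩
  · rw [(hXd 0 ⟨by linarith, hε⟩).deriv]
    simp
  · intro u hu
    have hgu := hgne u hu
    have hκu : κ = g u - u * k u := by linarith [hgk u]
    rw [(hXd u hu).deriv, hfg u, hκu]
    field_simp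
    ring
end

section
/- Let λ > 0 with λ ≠ 1 and let g : ℝ → ℝ be a C^∞ function satisfying g(λ·x) = λ·g(x) for all x ∈ ℝ and g(−1/x) = g(x)/x² for all x ≠ 0. Then g(x) = 0 for all x ∈ ℝ. -/
/-!
Dilation invariance gives `g 0 = 0` and makes the difference quotient of `g` at `0` take the same
value `g x / x` at all points `lam ^ n * x`. When `lam < 1` these points tend to `0`, so that value
is `g'(0)`, and `g` is linear (`eq_deriv_mul_of_dilation_invariant`); when `lam > 1` the same
argument applies to `lam⁻¹`. The rotation at `x = 1` gives `g (-1) = g 1`, so the slope is zero.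
-/

open Filter Topology

lemma eq_deriv_mul_of_dilation_invariant (μ : ℝ) (h0 : 0 < μ) (h1 : μ < 1)
    (g : ℝ → ℝ) (hg : DifferentiableAt ℝ g 0) (hinv : ∀ x : ℝ, g (μ * x) = μ * g x) (x : ℝ) :
    g x = deriv g 0 * x := by
  have hg0 : g 0 = 0 := by
    have h := hinv 0
    rw [mul_zero] at h
    have h' : (1 - μ) * g 0 = 0 := by linarith
    exact (mul_eq_zero.mp h').resolve_left (by linarith)
  rcases eq_or_ne x 0 with rfl | hx
  · simp [hg0]
  have hpow : ∀ n : ℕ, g (μ ^ n * x) = μ ^ n * g x := by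
    intro n
    induction n with
    | zero => simp
    | succ n ih => rw [pow_succ', mul_assoc, hinv, ih, mul_assoc]
  have hseq : Tendsto (fun n : ℕ => μ ^ n * x) atTop (𝓝[≠] 0) := by
    refine tendsto_nhdsWithin_iff.mpr ⟨?_, Eventually.of_forall fun n => ?_⟩
    · simpa using (tendsto_pow_atTop_nhds_zero_of_lt_one h0.le h1).mul_const x
    · exact mul_ne_zero (pow_ne_zero n h0.ne') hx
  have hlim := (hasDerivAt_iff_tendsto_slope_zero.mp hg.hasDerivAt).comp hseq
  have hconst : Tendsto (fun _ : ℕ => g x / x) atTop (𝓝 (deriv g 0)) := by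
    refine hlim.congr fun n => ?_
    have hn : μ ^ n ≠ 0 := pow_ne_zero n h0.ne'
    simp only [Function.comp_apply, zero_add, hg0, sub_zero, smul_eq_mul, hpow]
    field_simp
  rw [← tendsto_nhds_unique tendsto_const_nhds hconst, div_mul_cancel₀ _ hx]

/-- Second assertion of Lemma 3.5: a smooth vector field `g(x)∂ₓ` on the
projective line (in the affine chart) invariant under a hyperbolic
transformation `x ↦ λx` (`λ > 0`, `λ ≠ 1`) and under the elliptic rotation
`x ↦ -1/x` vanishes identically. -/
theorem invariant_field_with_elliptic_element_is_zero
    (lam : ℝ) (hlam : 0 < lam) (hne : lam ≠ 1)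
    (g : ℝ → ℝ) (hg : ContDiff ℝ (⊤ : ℕ∞) g)
    (hinv : ∀ x : ℝ, g (lam * x) = lam * g x)
    (hell : ∀ x : ℝ, x ≠ 0 → g (-1 / x) = g x / x ^ 2) :
    ∀ x : ℝ, g x = 0 := by
  have hd : DifferentiableAt ℝ g 0 := (hg.differentiable (by simp)).differentiableAt
  have hlin : ∀ x, g x = deriv g 0 * x := by
    rcases lt_or_gt_of_ne hne with h | h
    · exact eq_deriv_mul_of_dilation_invariant lam hlam h g hd hinv
    · refine eq_deriv_mul_of_dilation_invariant lam⁻¹ (inv_pos.mpr hlam)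
        (inv_lt_one_of_one_lt₀ h) g hd fun x => ?_
      have hx := hinv (lam⁻¹ * x)
      rw [mul_inv_cancel_left₀ hlam.ne'] at hx
      rw [hx, inv_mul_cancel_left₀ hlam.ne']
  have hrot := hell 1 one_ne_zero
  rw [hlin, hlin 1] at hrot
  have hc : deriv g 0 = 0 := by
    norm_num at hrot
    linarith
  intro x
  rw [hlin, hc, zero_mul]
end
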